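/- arXiv:1204.1502 — 2 statements merged into one kernel-verified Lean document; each statement's English description precedes it below -/
import Mathlib

section
/- For every real number μ with 0 < μ < 1, Euler's quintic polynomial p(x) = x^5 − (3−μ)x^4 + (3−2μ)x^3 − μx^2 + 2μx − μ has exactly one root in the open interval (0, ∞), and this unique positive root lies in the open interval (0, 1). -/
/-!
Put `A x = x² (1 - (1 - x)³)` and `B x = (1 - x)² (1 - x³)`. The quintic is the combination
`(1 - μ) A - μ B` (`eulerQuintic_eq`). For `x ≥ 1` we have `A > 0` and `B ≤ 0`, so the quintic
is positive and every positive root is smaller than `1`. On `[0, 1]` each of `A` and `-B` is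
strictly increasing, as both factors of `A` increase from `0` and both factors of `B` decrease
to `0`; hence so is the quintic, and there is at most one root. Its values `-μ < 0` at `0` and
`1 - μ > 0` at `1` give existence by the intermediate value theorem.
-/

/-- Euler's quintic polynomial arising in the PCRTBP with mass parameter `μ`:
its unique positive root gives the distance from `L1` to the lighter primary. -/
def eulerQuintic (μ x : ℝ) : ℝ :=
  x^5 - (3 - μ) * x^4 + (3 - 2*μ) * x^3 - μ * x^2 + 2*μ*x - μ

theorem eulerQuintic_eq (μ x : ℝ) :
    eulerQuintic μ x =
      (1 - μ) * (x^2 * (1 - (1 - x)^3)) - μ * ((1 - x)^2 * (1 - x^3)) := by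
  unfold eulerQuintic
  ring

theorem eulerQuintic_strictMonoOn {μ : ℝ} (hμ0 : 0 < μ) (hμ1 : μ < 1) :
    StrictMonoOn (eulerQuintic μ) (Set.Icc 0 1) := by
  rintro x ⟨hx0, hx1⟩ y ⟨hy0, hy1⟩ hxy
  have hx2 : x^2 < y^2 := pow_lt_pow_left₀ hxy hx0 (by norm_num)
  have hx3 : x^3 < y^3 := pow_lt_pow_left₀ hxy hx0 (by norm_num)
  have hy2' : (1 - y)^2 < (1 - x)^2 :=
    pow_lt_pow_left₀ (by linarith) (by linarith) (by norm_num)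
  have hy3' : (1 - y)^3 < (1 - x)^3 :=
    pow_lt_pow_left₀ (by linarith) (by linarith) (by norm_num)
  have hx3' : (1 - x)^3 ≤ 1 := pow_le_one₀ (by linarith) (by linarith)
  have hy3 : y^3 ≤ 1 := pow_le_one₀ hy0 hy1
  have hA : x^2 * (1 - (1 - x)^3) < y^2 * (1 - (1 - y)^3) :=
    mul_lt_mul'' hx2 (by linarith) (by positivity) (by linarith)
  have hB : (1 - y)^2 * (1 - y^3) < (1 - x)^2 * (1 - x^3) :=
    mul_lt_mul'' hy2' (by linarith) (by positivity) (by linarith)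
  rw [eulerQuintic_eq, eulerQuintic_eq]
  have h1 := mul_lt_mul_of_pos_left hA (sub_pos.2 hμ1)
  have h2 := mul_lt_mul_of_pos_left hB hμ0
  linarith

theorem eulerQuintic_pos_of_one_le {μ x : ℝ} (hμ0 : 0 < μ) (hμ1 : μ < 1) (hx : 1 ≤ x) :
    0 < eulerQuintic μ x := by
  have hA : 0 < x^2 * (1 - (1 - x)^3) := by
    have h : (1 - x)^3 ≤ 0 := Odd.pow_nonpos (by decide) (by linarith)
    have : 0 < 1 - (1 - x)^3 := by linarith
    positivity
  have hB : (1 - x)^2 * (1 - x^3) ≤ 0 :=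
    mul_nonpos_of_nonneg_of_nonpos (sq_nonneg _) (by linarith [one_le_pow₀ hx (n := 3)])
  rw [eulerQuintic_eq]
  have h1 := mul_pos (sub_pos.2 hμ1) hA
  have h2 := mul_nonpos_of_nonneg_of_nonpos hμ0.le hB
  linarith

/-- For every `0 < μ < 1`, Euler's quintic has exactly one root in `(0, ∞)`,
and this unique positive root lies in `(0, 1)`. -/
theorem euler_quintic_unique_positive_root (μ : ℝ) (hμ0 : 0 < μ) (hμ1 : μ < 1) :
    (∃! x : ℝ, 0 < x ∧ eulerQuintic μ x = 0) ∧
    (∀ x : ℝ, 0 < x → eulerQuintic μ x = 0 → 0 < x ∧ x < 1) := by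
  have hlt : ∀ x : ℝ, eulerQuintic μ x = 0 → x < 1 := fun x hx =>
    lt_of_not_ge fun h => (eulerQuintic_pos_of_one_le hμ0 hμ1 h).ne' hx
  refine ⟨?_, fun x h0 hx => ⟨h0, hlt x hx⟩⟩
  have hc : ContinuousOn (eulerQuintic μ) (Set.Icc 0 1) := by
    unfold eulerQuintic
    fun_prop
  obtain ⟨x, hx, hx0⟩ := intermediate_value_Ioo zero_le_one hc
    (show (0 : ℝ) ∈ Set.Ioo (eulerQuintic μ 0) (eulerQuintic μ 1) by
      constructor
      · simpa [eulerQuintic] using hμ0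
      · exact eulerQuintic_pos_of_one_le hμ0 hμ1 le_rfl)
  refine ⟨x, ⟨hx.1, hx0⟩, fun y ⟨hy, hy0⟩ => ?_⟩
  exact (eulerQuintic_strictMonoOn hμ0 hμ1).injOn ⟨hy.le, (hlt y hy0).le⟩
    ⟨hx.1.le, hx.2.le⟩ (hy0.trans hx0.symm)
end

section
/- Fix μ ∈ (0,1), an integer n ≥ 1, and D₁ > 0, and let z ∈ ℝ⁴ be a weakly n-stable initial condition: the solution of the PCRTBP equations of motion starting at z avoids both primaries on [0, T], its continuous polar angle θ about P1 satisfies θ(T) = θ(0) + 2πn with T the first such time, r(t) < D₁ on [0, T], and θ'(t) ≠ 0 at every time in (0, T] at which θ(t) − θ(0) ∈ 2πℤ. Then the n-th return time and the n-th return map to the radial ray through the initial point are well-defined on a neighborhood of z in ℝ⁴ and continuous at z: there is a neighborhood U of z and a continuous function τ : U → (0, ∞) with τ(z) = T such that for every w ∈ U the solution starting at w exists on [0, τ(w)], its polar angle satisfies θ_w(τ(w)) = θ_w(0) + 2πn, and the map w ↦ (x_w(τ(w)), y_w(τ(w)), x_w'(τ(w)), y_w'(τ(w))) is continuous at z. 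-/
/-!
The polar angle is made part of the dynamics: to the phase point `(x, y, x', y')` one adjoins a
fifth coordinate `a`, the angle swept since time `0`, whose rate is the angular velocity
`((x - μ) y' - y x') / ((x - μ)² + y²)`. The resulting field `extField μ` on `ℝ⁵` is `C¹` away from
the two primaries, and the given trajectory, with `a = θ - θ 0`, is one of its integral curves
(`angular_velocity_of_polar` identifies `θ'` with the angular velocity).

Existence of solutions past time `T` and continuous dependence on the initial condition come from
`exists_flow_near_trajectory`: multiplying the field by a bump function equal to `1` near the
compact trajectory gives a bounded, globally Lipschitz field, to which a single application of
Picard-Lindelöf on `[-1, T + 1]` applies; by compactness, nearby solutions stay where the bump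
function equals `1`.

Transversality at time `T` says that `a` has nonzero velocity there, so for nearby initial
conditions `a` is strictly monotone in `t` close to `T`, and the time at which it reaches `2πn`
depends continuously on the initial condition (`exists_continuous_crossing`, the implicit function
theorem for functions that are only continuous in the parameter). Finally, adding to `a` the
argument of the initial position gives a polar angle along the whole solution
(`polar_of_hasDerivAt`).
-/

/-- The effective potential of the PCRTBP with mass parameter `μ`, in rotating
coordinates, with the heavier primary `P1 = (μ, 0)` and lighter primary `P2 = (μ-1, 0)`. -/
noncomputable def omegaPot (μ x y : ℝ) : ℝ :=
  (1/2) * (x^2 + y^2) + (1 - μ) / Real.sqrt ((x - μ)^2 + y^2)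
    + μ / Real.sqrt ((x + 1 - μ)^2 + y^2) + (1/2) * μ * (1 - μ)

/-- Partial derivative `∂ω/∂x`. -/
noncomputable def omegaX (μ x y : ℝ) : ℝ :=
  fderiv ℝ (fun p : ℝ × ℝ => omegaPot μ p.1 p.2) (x, y) (1, 0)

/-- Partial derivative `∂ω/∂y`. -/
noncomputable def omegaY (μ x y : ℝ) : ℝ :=
  fderiv ℝ (fun p : ℝ × ℝ => omegaPot μ p.1 p.2) (x, y) (0, 1)

section

/-! ### Flows and level crossings -/

open Set Filter Topology Metric Function

/-- If `f w` is strictly increasing near `T` for every `w` near `z`, and `f` is separately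
continuous, then the level `f z T` is reached at a time depending continuously on `w`. -/
theorem exists_continuous_crossing {E : Type*} [TopologicalSpace E] (f : E → ℝ → ℝ)
    (z : E) (T a b : ℝ) (haT : a < T) (hTb : T < b) (W : Set E) (hW : IsOpen W) (hz : z ∈ W)
    (hf : ∀ t ∈ Icc a b, ContinuousOn (fun w => f w t) W)
    (hft : ∀ w ∈ W, ContinuousOn (f w) (Icc a b))
    (hmono : ∀ w ∈ W, StrictMonoOn (f w) (Icc a b)) :
    ∃ U ∈ 𝓝 z, U ⊆ W ∧ ∃ τ : E → ℝ, ContinuousOn τ U ∧ τ z = T ∧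
      ∀ w ∈ U, τ w ∈ Ioo a b ∧ f w (τ w) = f z T := by
  have hab : a < b := haT.trans hTb
  have ha : a ∈ Icc a b := ⟨le_rfl, hab.le⟩
  have hb : b ∈ Icc a b := ⟨hab.le, le_rfl⟩
  have hT : T ∈ Icc a b := ⟨haT.le, hTb.le⟩
  set c := f z T
  set U : Set E := {w | w ∈ W ∧ f w a < c ∧ c < f w b} with hU
  have key : ∀ w ∈ U, ∃ t ∈ Ioo a b, f w t = c := by
    rintro w ⟨hw, h1, h2⟩
    exact intermediate_value_Ioo hab.le (hft w hw) ⟨h1, h2⟩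
  classical
  choose! τ hτ hτc using key
  have hzU : z ∈ U := ⟨hz, hmono z hz ha hT haT, hmono z hz hT hb hTb⟩
  have hev : ∀ w ∈ W, ∀ᶠ w' in 𝓝 w, w' ∈ W := fun w hw => hW.mem_nhds hw
  have hfc : ∀ w ∈ W, ∀ t ∈ Icc a b, ContinuousAt (fun w => f w t) w := fun w hw t ht =>
    (hf t ht).continuousAt (hW.mem_nhds hw)
  have hUn : ∀ w ∈ U, U ∈ 𝓝 w := by
    rintro w ⟨hw, h1, h2⟩
    filter_upwards [hev w hw, (hfc w hw a ha).eventually_lt_const h1,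
      (hfc w hw b hb).eventually_const_lt h2] with w' h h' h'' using ⟨h, h', h''⟩
  refine ⟨U, hUn z hzU, fun w hw => hw.1, τ, ?_, ?_, fun w hw => ⟨hτ w hw, hτc w hw⟩⟩
  · intro w hw
    apply ContinuousAt.continuousWithinAt
    have hI : ∀ w' ∈ U, τ w' ∈ Icc a b := fun w' hw' => Ioo_subset_Icc_self (hτ w' hw')
    refine tendsto_order.2 ⟨fun l hl => ?_, fun l hl => ?_⟩
    · rcases lt_or_ge l a with h | h
      · filter_upwards [hUn w hw] with w' hw' using h.trans (hτ w' hw').1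
      · have hlI : l ∈ Icc a b := ⟨h, hl.le.trans (hI w hw).2⟩
        have : f w l < c := hτc w hw ▸ hmono w hw.1 hlI (hI w hw) hl
        filter_upwards [hUn w hw, (hfc w hw.1 l hlI).eventually_lt_const this] with w' hw' h'
        exact ((hmono w' hw'.1).lt_iff_lt hlI (hI w' hw')).1 (by rwa [hτc w' hw'])
    · rcases lt_or_ge b l with h | h
      · filter_upwards [hUn w hw] with w' hw' using (hτ w' hw').2.trans h
      · have hlI : l ∈ Icc a b := ⟨(hI w hw).1.trans hl.le, h⟩
        have : c < f w l := hτc w hw ▸ hmono w hw.1 (hI w hw) hlI hl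
        filter_upwards [hUn w hw, (hfc w hw.1 l hlI).eventually_const_lt this] with w' hw' h'
        exact ((hmono w' hw'.1).lt_iff_lt (hI w' hw') hlI).1 (by rwa [hτc w' hw'])
  · exact (hmono z hz).injOn (Ioo_subset_Icc_self (hτ z hzU)) hT (hτc z hzU)

/-- A field that is `C¹` on an open set `Ω` agrees, near a compact subset of `Ω`, with a bounded
globally Lipschitz field. -/
theorem exists_cutoff {E : Type*} [NormedAddCommGroup E] [NormedSpace ℝ E]
    [FiniteDimensional ℝ E] (G : E → E) (Ω K : Set E) (hΩ : IsOpen Ω) (hK : IsCompact K)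
    (hKΩ : K ⊆ Ω) (hG : ∀ p ∈ Ω, ContDiffAt ℝ 1 G p) :
    ∃ F : E → E, (∃ C, LipschitzWith C F) ∧ (∃ M : ℝ, ∀ p, ‖F p‖ ≤ M) ∧
      ∃ O, IsOpen O ∧ K ⊆ O ∧ O ⊆ Ω ∧ ∀ p ∈ O, F p = G p := by
  obtain ⟨L, hL, hKL, hLΩ⟩ := exists_compact_between hK hΩ hKΩ
  obtain ⟨χ, h1, h0, -⟩ := exists_contMDiffMap_one_nhds_of_subset_interior
    (n := 1) (modelWithCornersSelf ℝ E) hK.isClosed hKL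
  have hχ : ContDiff ℝ 1 (χ : E → ℝ) := χ.contMDiff.contDiff
  have hsupp : tsupport (χ : E → ℝ) ⊆ L := closure_minimal
    (fun x hx => by by_contra h; exact hx (h0 x h)) hL.isClosed
  have hF : ContDiff ℝ 1 (fun p => χ p • G p) := by
    rw [contDiff_iff_contDiffAt]
    intro p
    by_cases hp : p ∈ Ω
    · exact hχ.contDiffAt.smul (hG p hp)
    · have : (χ : E → ℝ) =ᶠ[𝓝 p] 0 :=
        notMem_tsupport_iff_eventuallyEq.1 fun h => hp (hLΩ (hsupp h))
      refine (contDiffAt_const (c := (0 : E))).congr_of_eventuallyEq ?_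
      filter_upwards [this] with q hq
      simp [hq]
  have hFs : HasCompactSupport (fun p => χ p • G p) :=
    HasCompactSupport.intro hL fun x hx => by simp [h0 x hx]
  obtain ⟨O, hO, hKO, hO1⟩ := mem_nhdsSet_iff_exists.1 h1
  refine ⟨_, hF.lipschitzWith_of_hasCompactSupport hFs one_ne_zero,
    hFs.exists_bound_of_continuous hF.continuous, O ∩ Ω, hO.inter hΩ, subset_inter hKO hKΩ,
    inter_subset_right, fun p hp => ?_⟩
  have : χ p = 1 := hO1 hp.1
  simp [this]

/-- Near a solution `γ` on `[0, T]` of an autonomous `C¹` equation, solutions exist on a common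
longer interval `[0, T + δ]`, remain in the domain, and depend continuously on time and initial
condition. -/
theorem exists_flow_near_trajectory {E : Type*} [NormedAddCommGroup E] [NormedSpace ℝ E]
    [FiniteDimensional ℝ E] (G : E → E) (Ω : Set E) (hΩ : IsOpen Ω)
    (hG : ∀ p ∈ Ω, ContDiffAt ℝ 1 G p) (γ : ℝ → E) (T : ℝ) (hT : 0 < T)
    (hγ : ∀ t ∈ Icc 0 T, HasDerivAt γ (G (γ t)) t ∧ γ t ∈ Ω) :
    ∃ (δ : ℝ) (W : Set E) (φ : E → ℝ → E), 0 < δ ∧ IsOpen W ∧ γ 0 ∈ W ∧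
      (∀ w ∈ W, φ w 0 = w ∧
        ∀ t ∈ Icc 0 (T + δ), HasDerivAt (φ w) (G (φ w t)) t ∧ φ w t ∈ Ω) ∧
      (∀ w ∈ W, ∀ t ∈ Icc 0 (T + δ), ContinuousAt (uncurry φ) (w, t)) ∧
      ∀ t ∈ Icc 0 T, φ (γ 0) t = γ t := by
  have hγc : ContinuousOn γ (Icc 0 T) := fun t ht => (hγ t ht).1.continuousAt.continuousWithinAt
  obtain ⟨F, ⟨C, hC⟩, ⟨M, hM⟩, O, hO, hKO, hOΩ, hFG⟩ := exists_cutoff G Ω (γ '' Icc 0 T) hΩ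
    (isCompact_Icc.image_of_continuousOn hγc) (by rintro _ ⟨t, ht, rfl⟩; exact (hγ t ht).2) hG
  have hM0 : 0 ≤ M := (norm_nonneg _).trans (hM 0)
  -- The radius `M * (T + 1) + 1` is large enough that no solution with speed at most `M` issued
  -- from the unit ball can leave the ball during `[-1, T + 1]`.
  have hpl : IsPicardLindelof (fun _ => F) (tmin := -1) (tmax := T + 1)
      ⟨0, by constructor <;> linarith⟩ (γ 0)
      (a := ⟨M * (T + 1) + 1, by positivity⟩) (r := 1) (L := ⟨M, hM0⟩) (K := C) := by
    refine .of_time_independent (fun x _ => hM x) hC.lipschitzOnWith ?_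
    have : max (T + 1 - 0) (0 - -1) = T + 1 := by rw [max_eq_left] <;> linarith
    simp only [this]
    change M * (T + 1) ≤ M * (T + 1) + 1 - 1
    simp
  obtain ⟨α, hα, hαc⟩ := hpl.exists_forall_mem_closedBall_eq_hasDerivWithinAt_continuousOn
  have hα' : ∀ w ∈ closedBall (γ 0) 1, ∀ t ∈ Ioo (-1) (T + 1),
      HasDerivAt (fun t => α (w, t)) (F (α (w, t))) t := fun w hw t ht =>
    ((hα w hw).2 t (Ioo_subset_Icc_self ht)).hasDerivAt (Icc_mem_nhds ht.1 ht.2)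
  have hz : γ 0 ∈ closedBall (γ 0) 1 := by simp
  have heq : EqOn (fun t => α (γ 0, t)) γ (Icc 0 T) := by
    refine ODE_solution_unique_of_mem_Icc_right (v := fun _ => F) (s := fun _ => univ) (K := C)
      (fun t _ => hC.lipschitzOnWith) ?_ ?_ (fun _ _ => mem_univ _) hγc ?_
      (fun _ _ => mem_univ _) (hα _ hz).1
    · exact fun t ht => (hα' _ hz t ⟨by linarith [ht.1], by linarith [ht.2]⟩).continuousAt.continuousWithinAt
    · exact fun t ht => (hα' _ hz t ⟨by linarith [ht.1], by linarith [ht.2]⟩).hasDerivWithinAt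
    · intro t ht
      have ht' := Ico_subset_Icc_self ht
      rw [hFG _ (hKO ⟨t, ht', rfl⟩)]
      exact (hγ t ht').1.hasDerivWithinAt
  have hopen : IsOpen (ball (γ 0) 1 ×ˢ Ioo (-1) (T + 1)) := isOpen_ball.prod isOpen_Ioo
  have hαc' : ContinuousOn α (ball (γ 0) 1 ×ˢ Ioo (-1) (T + 1)) :=
    hαc.mono (prod_mono ball_subset_closedBall Ioo_subset_Icc_self)
  -- Tube lemma: nearby solutions stay in `O`, where the cut-off field is the original one.
  have hN := hαc'.isOpen_inter_preimage hopen hO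
  obtain ⟨u, v, hu, hv, hzu, hTv, huv⟩ := generalized_tube_lemma (isCompact_singleton (x := γ 0))
    (isCompact_Icc (a := 0) (b := T)) hN (by
      rintro ⟨w, t⟩ ⟨hw, ht⟩
      obtain rfl : w = γ 0 := hw
      have ht : t ∈ Icc 0 T := ht
      refine ⟨⟨by simp, by linarith [ht.1], by linarith [ht.2]⟩, ?_⟩
      have := heq ht
      simp only at this
      rw [mem_preimage, this]
      exact hKO ⟨t, ht, rfl⟩)
  obtain ⟨δ, hδ, hδv⟩ := Metric.isOpen_iff.1 hv T (hTv ⟨hT.le, le_rfl⟩)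
  have hmem : ∀ w ∈ u, ∀ t ∈ Icc 0 (T + δ / 2),
      (w, t) ∈ ball (γ 0) 1 ×ˢ Ioo (-1) (T + 1) ∩ α ⁻¹' O := by
    intro w hw t ht
    refine huv ⟨hw, ?_⟩
    rcases le_total t T with h | h
    · exact hTv ⟨ht.1, h⟩
    · apply hδv
      rw [mem_ball, Real.dist_eq, abs_of_nonneg] <;> linarith [ht.2]
  refine ⟨δ / 2, u, fun w t => α (w, t), by positivity, hu, hzu rfl, fun w hw => ?_, ?_, heq⟩
  · have h0 := (hmem w hw 0 ⟨le_rfl, by linarith⟩).1.1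
    refine ⟨(hα w (ball_subset_closedBall h0)).1, fun t ht => ?_⟩
    have h := hmem w hw t ht
    rw [← hFG _ h.2]
    exact ⟨hα' w (ball_subset_closedBall h0) t h.1.2, hOΩ h.2⟩
  · intro w hw t ht
    exact hαc'.continuousAt (hopen.mem_nhds (hmem w hw t ht).1)

/-! ### The extended vector field -/

/-- The PCRTBP vector field in the variables `(x, y, x', y', a)`, where `a` is an additional
coordinate evolving with the angular velocity about `P1 = (μ, 0)`. -/
noncomputable def extField (μ : ℝ) (p : ℝ × ℝ × ℝ × ℝ × ℝ) : ℝ × ℝ × ℝ × ℝ × ℝ :=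
  (p.2.2.1, p.2.2.2.1, omegaX μ p.1 p.2.1 + 2 * p.2.2.2.1, omegaY μ p.1 p.2.1 - 2 * p.2.2.1,
    ((p.1 - μ) * p.2.2.2.1 - p.2.1 * p.2.2.1) / ((p.1 - μ) ^ 2 + p.2.1 ^ 2))

/-- The points `(x, y, x', y', a)` whose position `(x, y)` is neither primary, expressed through the
positivity of the squared distances to the primaries. -/
def extDomain (μ : ℝ) : Set (ℝ × ℝ × ℝ × ℝ × ℝ) :=
  {p | 0 < (p.1 - μ) ^ 2 + p.2.1 ^ 2 ∧ 0 < (p.1 + 1 - μ) ^ 2 + p.2.1 ^ 2}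

theorem isOpen_extDomain (μ : ℝ) : IsOpen (extDomain μ) := by
  unfold extDomain
  rw [ofPred_and]
  exact (isOpen_lt (by fun_prop) (by fun_prop)).inter (isOpen_lt (by fun_prop) (by fun_prop))

theorem sq_add_sq_pos_iff_ne (a b c d : ℝ) :
    0 < (a - c) ^ 2 + (b - d) ^ 2 ↔ (a, b) ≠ (c, d) := by
  constructor
  · rintro h ⟨⟩
    simp at h
  · intro h
    by_contra hn
    have h1 : a - c = 0 := by nlinarith [sq_nonneg (a - c), sq_nonneg (b - d)]
    have h2 : b - d = 0 := by nlinarith [sq_nonneg (a - c), sq_nonneg (b - d)]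
    exact h (by rw [sub_eq_zero.1 h1, sub_eq_zero.1 h2])

theorem mem_extDomain_iff (μ : ℝ) (p : ℝ × ℝ × ℝ × ℝ × ℝ) :
    p ∈ extDomain μ ↔ (p.1, p.2.1) ≠ (μ, 0) ∧ (p.1, p.2.1) ≠ (μ - 1, 0) := by
  rw [← sq_add_sq_pos_iff_ne, ← sq_add_sq_pos_iff_ne, sub_zero, ← sub_add, sub_add_eq_add_sub]
  rfl

theorem contDiffAt_omegaPot (μ : ℝ) (q : ℝ × ℝ) (h1 : 0 < (q.1 - μ) ^ 2 + q.2 ^ 2)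
    (h2 : 0 < (q.1 + 1 - μ) ^ 2 + q.2 ^ 2) :
    ContDiffAt ℝ 2 (fun p : ℝ × ℝ => omegaPot μ p.1 p.2) q := by
  unfold omegaPot
  have c1 : ContDiffAt ℝ 2 (fun p : ℝ × ℝ => Real.sqrt ((p.1 - μ) ^ 2 + p.2 ^ 2)) q :=
    ContDiffAt.sqrt (by fun_prop) h1.ne'
  have c2 : ContDiffAt ℝ 2 (fun p : ℝ × ℝ => Real.sqrt ((p.1 + 1 - μ) ^ 2 + p.2 ^ 2)) q :=
    ContDiffAt.sqrt (by fun_prop) h2.ne'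
  exact ((ContDiffAt.add (by fun_prop)
    (contDiffAt_const.div c1 (Real.sqrt_pos.2 h1).ne')).add
    (contDiffAt_const.div c2 (Real.sqrt_pos.2 h2).ne')).add contDiffAt_const

theorem contDiffAt_extField (μ : ℝ) (p : ℝ × ℝ × ℝ × ℝ × ℝ) (hp : p ∈ extDomain μ) :
    ContDiffAt ℝ 1 (extField μ) p := by
  have hD : ContDiffAt ℝ 1 (fderiv ℝ (fun p : ℝ × ℝ => omegaPot μ p.1 p.2)) (p.1, p.2.1) :=
    (contDiffAt_omegaPot μ (p.1, p.2.1) hp.1 hp.2).fderiv_right (by norm_num)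
  have hpr : ContDiffAt ℝ 1 (fun p : ℝ × ℝ × ℝ × ℝ × ℝ => (p.1, p.2.1)) p := by fun_prop
  have hD' : ContDiffAt ℝ 1 (fun p : ℝ × ℝ × ℝ × ℝ × ℝ =>
      fderiv ℝ (fun p : ℝ × ℝ => omegaPot μ p.1 p.2) (p.1, p.2.1)) p :=
    ContDiffAt.comp (g := fderiv ℝ (fun p : ℝ × ℝ => omegaPot μ p.1 p.2)) p hD hpr
  have hX : ContDiffAt ℝ 1 (fun p : ℝ × ℝ × ℝ × ℝ × ℝ => omegaX μ p.1 p.2.1) p :=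
    hD'.clm_apply contDiffAt_const
  have hY : ContDiffAt ℝ 1 (fun p : ℝ × ℝ × ℝ × ℝ × ℝ => omegaY μ p.1 p.2.1) p :=
    hD'.clm_apply contDiffAt_const
  unfold extField
  refine ContDiffAt.prodMk (by fun_prop) (ContDiffAt.prodMk (by fun_prop)
    (ContDiffAt.prodMk (hX.add (by fun_prop)) (ContDiffAt.prodMk (hY.sub (by fun_prop))
    (ContDiffAt.div (by fun_prop) (by fun_prop) hp.1.ne'))))

/-! ### Polar angles and angular velocity -/

/-- A function that is a polar angle about `(μ, 0)` at time `0` and evolves with the angular velocity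
is a polar angle at all times. -/
theorem polar_of_hasDerivAt {x y x' y' θ : ℝ → ℝ} {τ : ℝ} (μ : ℝ)
    (hx : ∀ t ∈ Icc 0 τ, HasDerivAt x (x' t) t) (hy : ∀ t ∈ Icc 0 τ, HasDerivAt y (y' t) t)
    (hpos : ∀ t ∈ Icc 0 τ, 0 < (x t - μ) ^ 2 + y t ^ 2)
    (hθ : ∀ t ∈ Icc 0 τ, HasDerivAt θ
      (((x t - μ) * y' t - y t * x' t) / ((x t - μ) ^ 2 + y t ^ 2)) t)
    (hx0 : x 0 = μ + √((x 0 - μ) ^ 2 + y 0 ^ 2) * Real.cos (θ 0))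
    (hy0 : y 0 = √((x 0 - μ) ^ 2 + y 0 ^ 2) * Real.sin (θ 0)) (t : ℝ) (ht : t ∈ Icc 0 τ) :
    x t = μ + √((x t - μ) ^ 2 + y t ^ 2) * Real.cos (θ t) ∧
      y t = √((x t - μ) ^ 2 + y t ^ 2) * Real.sin (θ t) := by
  -- `g` is the inner product of the unit vectors of direction `(x - μ, y)` and of angle `θ`; both
  -- rotate with the same angular velocity, so `g` is constant.
  set ρ : ℝ → ℝ := fun s => √((x s - μ) ^ 2 + y s ^ 2) with hρ
  set g : ℝ → ℝ := fun s => ((x s - μ) * Real.cos (θ s) + y s * Real.sin (θ s)) / ρ s with hg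
  have hρpos : ∀ s ∈ Icc 0 τ, 0 < ρ s := fun s hs => Real.sqrt_pos.2 (hpos s hs)
  have hρsq : ∀ s ∈ Icc 0 τ, ρ s ^ 2 = (x s - μ) ^ 2 + y s ^ 2 :=
    fun s hs => Real.sq_sqrt (hpos s hs).le
  have hgd : ∀ s ∈ Icc 0 τ, HasDerivAt g 0 s := by
    intro s hs
    have hρd : HasDerivAt ρ (((x s - μ) * x' s + y s * y' s) / ρ s) s := by
      have := ((((hx s hs).sub_const μ).pow 2).add ((hy s hs).pow 2)).sqrt (hpos s hs).ne'
      refine this.congr_deriv ?_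
      have h0 : √((x s - μ) ^ 2 + y s ^ 2) ≠ 0 := (hρpos s hs).ne'
      simp only [hρ, Pi.add_apply, Pi.pow_apply]
      field_simp
      ring
    have := ((((hx s hs).sub_const μ).mul (hθ s hs).cos).add
      ((hy s hs).mul (hθ s hs).sin)).div hρd (hρpos s hs).ne'
    refine this.congr_deriv ?_
    have h0 := (hρpos s hs).ne'
    have h1 := hρsq s hs
    rw [← h1]
    simp only [Pi.add_apply, Pi.mul_apply]
    field_simp
    linear_combination (x' s * Real.cos (θ s) + y' s * Real.sin (θ s)) * h1
  have h0 : (0 : ℝ) ∈ Icc 0 τ := ⟨le_rfl, ht.1.trans ht.2⟩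
  have hg0 : g 0 = 1 := by
    have : (x 0 - μ) * Real.cos (θ 0) + y 0 * Real.sin (θ 0) = ρ 0 := by
      have e1 : x 0 - μ = ρ 0 * Real.cos (θ 0) := by linarith
      rw [e1, show y 0 = ρ 0 * Real.sin (θ 0) from hy0]
      linear_combination ρ 0 * Real.sin_sq_add_cos_sq (θ 0)
    simp only [hg]
    rw [this, div_self (hρpos 0 h0).ne']
  have hgt : g t = 1 := by
    rw [← hg0]
    refine constant_of_derivWithin_zero (f := g) (a := 0) (b := τ)
      (fun s hs => (hgd s hs).differentiableAt.differentiableWithinAt) (fun s hs => ?_) t ht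
    have hs' := Ico_subset_Icc_self hs
    exact (hgd s hs').hasDerivWithinAt.derivWithin
      (uniqueDiffOn_Icc (hs.1.trans_lt hs.2) s hs')
  have hu : (x t - μ) * Real.cos (θ t) + y t * Real.sin (θ t) = ρ t :=
    (div_eq_one_iff_eq (hρpos t ht).ne').1 hgt
  have h1 := hρsq t ht
  have h2 := Real.sin_sq_add_cos_sq (θ t)
  -- Lagrange's identity: the component orthogonal to the direction `θ` vanishes.
  have hv : -(x t - μ) * Real.sin (θ t) + y t * Real.cos (θ t) = 0 := by
    apply pow_eq_zero_iff (two_ne_zero) |>.1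
    linear_combination ((x t - μ) ^ 2 + y t ^ 2) * h2 - h1
      - ((x t - μ) * Real.cos (θ t) + y t * Real.sin (θ t) + ρ t) * hu
  constructor
  · linear_combination Real.cos (θ t) * hu - Real.sin (θ t) * hv - (x t - μ) * h2
  · linear_combination Real.sin (θ t) * hu + Real.cos (θ t) * hv - y t * h2

/-- The derivative of a polar angle is the angular velocity. The radius `r` is not assumed
differentiable: the relation comes from differentiating `y cos θ - (x - μ) sin θ = 0`, which holds
only on `[0, T]`, so that one-sided derivatives are used at the endpoints. -/
theorem angular_velocity_of_polar {x y r θ : ℝ → ℝ} {x' y' θ' T μ t : ℝ} (hT : 0 < T)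
    (ht : t ∈ Icc 0 T)
    (hx : HasDerivAt x x' t) (hy : HasDerivAt y y' t) (hθ : HasDerivAt θ θ' t)
    (hpolar : ∀ t ∈ Icc 0 T, 0 < r t ∧ x t = μ + r t * Real.cos (θ t) ∧
      y t = r t * Real.sin (θ t)) :
    θ' = ((x t - μ) * y' - y t * x') / ((x t - μ) ^ 2 + y t ^ 2) := by
  have hd := (((hy.mul hθ.cos).sub ((hx.sub_const μ).mul hθ.sin))).hasDerivWithinAt (s := Icc 0 T)
  have hd0 : HasDerivWithinAt (fun _ : ℝ => (0 : ℝ)) 0 (Icc 0 T) t :=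
    hasDerivWithinAt_const _ _ _
  have heq : ∀ s ∈ Icc 0 T, y s * Real.cos (θ s) - (x s - μ) * Real.sin (θ s) = 0 := by
    intro s hs
    obtain ⟨-, h1, h2⟩ := hpolar s hs
    rw [h1, h2]; ring
  have hd0' := hd0.congr (f₁ := fun s => y s * Real.cos (θ s) - (x s - μ) * Real.sin (θ s))
    heq (heq t ht)
  have key := (uniqueDiffOn_Icc hT t ht).eq_deriv _ hd hd0'
  obtain ⟨hr, h1, h2⟩ := hpolar t ht
  have e1 : x t - μ = r t * Real.cos (θ t) := by linarith
  have h3 := Real.sin_sq_add_cos_sq (θ t)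
  have hden : (x t - μ) ^ 2 + y t ^ 2 = r t ^ 2 := by
    rw [e1, h2]; linear_combination r t ^ 2 * h3
  rw [hden, e1, h2]
  rw [e1, h2] at key
  field_simp
  linear_combination -key - r t * θ' * h3

end

/-! ### The return map -/

/-- If `z` is a weakly `n`-stable initial condition for the PCRTBP (its trajectory makes
`n` full turns around `P1 = (μ,0)` by a first time `T`, staying at distance `< D₁` from
`P1`, with all returns to the initial radial ray transverse), then the `n`-th return
time and the `n`-th return map to that radial ray are well defined on a neighborhood `U`
of `z` and continuous at `z`:  there is a continuous `τ : U → (0,∞)` with `τ(z) = T`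
such that for every `w ∈ U` the solution starting at `w` exists on `[0, τ(w)]`, its
polar angle lift about `P1` satisfies `θ_w(τ(w)) = θ_w(0) + 2πn`, and
`w ↦ (x_w(τ(w)), y_w(τ(w)), x'_w(τ(w)), y'_w(τ(w)))` is continuous at `z`. -/
theorem return_map_continuous_at_weakly_n_stable_point
    (μ : ℝ) (hμ0 : 0 < μ) (hμ1 : μ < 1)
    (n : ℕ) (hn : 1 ≤ n) (D₁ : ℝ) (hD₁ : 0 < D₁)
    (z : ℝ × ℝ × ℝ × ℝ) (T : ℝ) (hT : 0 < T)
    (x y x' x'' y' y'' r θ θ' : ℝ → ℝ)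
    (hinit : x 0 = z.1 ∧ y 0 = z.2.1 ∧ x' 0 = z.2.2.1 ∧ y' 0 = z.2.2.2)
    (hderiv : ∀ t ∈ Set.Icc 0 T,
      HasDerivAt x (x' t) t ∧ HasDerivAt x' (x'' t) t ∧
      HasDerivAt y (y' t) t ∧ HasDerivAt y' (y'' t) t ∧
      HasDerivAt θ (θ' t) t)
    (hsol : ∀ t ∈ Set.Icc 0 T,
      (x t, y t) ≠ (μ, 0) ∧ (x t, y t) ≠ (μ - 1, 0) ∧
      x'' t - 2 * y' t = omegaX μ (x t) (y t) ∧
      y'' t + 2 * x' t = omegaY μ (x t) (y t))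
    (hrθcont : ContinuousOn r (Set.Icc 0 T) ∧ ContinuousOn θ (Set.Icc 0 T))
    (hpolar : ∀ t ∈ Set.Icc 0 T,
      0 < r t ∧ x t = μ + r t * Real.cos (θ t) ∧ y t = r t * Real.sin (θ t))
    (hturns : θ T = θ 0 + 2 * Real.pi * n)
    (hfirst : ∀ t ∈ Set.Ico 0 T, θ t ≠ θ 0 + 2 * Real.pi * n)
    (hdist : ∀ t ∈ Set.Icc 0 T, r t < D₁)
    (htransverse : ∀ t ∈ Set.Ioc 0 T,
      (∃ k : ℤ, θ t - θ 0 = 2 * Real.pi * k) → θ' t ≠ 0) :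
    ∃ U ∈ nhds z, ∃ τ : ℝ × ℝ × ℝ × ℝ → ℝ,
      ContinuousOn τ U ∧ (∀ w ∈ U, 0 < τ w) ∧ τ z = T ∧
      ∃ (X Y X' X'' Y' Y'' Θ : (ℝ × ℝ × ℝ × ℝ) → ℝ → ℝ),
        (∀ w ∈ U,
          X w 0 = w.1 ∧ Y w 0 = w.2.1 ∧ X' w 0 = w.2.2.1 ∧ Y' w 0 = w.2.2.2 ∧
          (∀ t ∈ Set.Icc 0 (τ w),
            HasDerivAt (X w) (X' w t) t ∧ HasDerivAt (X' w) (X'' w t) t ∧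
            HasDerivAt (Y w) (Y' w t) t ∧ HasDerivAt (Y' w) (Y'' w t) t) ∧
          (∀ t ∈ Set.Icc 0 (τ w),
            (X w t, Y w t) ≠ (μ, 0) ∧ (X w t, Y w t) ≠ (μ - 1, 0) ∧
            X'' w t - 2 * Y' w t = omegaX μ (X w t) (Y w t) ∧
            Y'' w t + 2 * X' w t = omegaY μ (X w t) (Y w t)) ∧
          ContinuousOn (Θ w) (Set.Icc 0 (τ w)) ∧
          (∀ t ∈ Set.Icc 0 (τ w),
            X w t = μ + Real.sqrt ((X w t - μ)^2 + (Y w t)^2) * Real.cos (Θ w t) ∧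
            Y w t = Real.sqrt ((X w t - μ)^2 + (Y w t)^2) * Real.sin (Θ w t)) ∧
          Θ w (τ w) = Θ w 0 + 2 * Real.pi * n) ∧
        ContinuousAt (fun w => (X w (τ w), Y w (τ w), X' w (τ w), Y' w (τ w))) z := by
  have hIcc0 : (0 : ℝ) ∈ Set.Icc 0 T := ⟨le_rfl, hT.le⟩
  have hIccT : T ∈ Set.Icc 0 T := ⟨hT.le, le_rfl⟩
  have hangvel : ∀ t ∈ Set.Icc 0 T,
      θ' t = ((x t - μ) * y' t - y t * x' t) / ((x t - μ) ^ 2 + y t ^ 2) := fun t ht =>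
    angular_velocity_of_polar hT ht (hderiv t ht).1 (hderiv t ht).2.2.1 (hderiv t ht).2.2.2.2
      hpolar
  set γ : ℝ → ℝ × ℝ × ℝ × ℝ × ℝ := fun t => (x t, y t, x' t, y' t, θ t - θ 0) with hγdef
  have hγ : ∀ t ∈ Set.Icc 0 T, HasDerivAt γ (extField μ (γ t)) t ∧ γ t ∈ extDomain μ := by
    intro t ht
    obtain ⟨d1, d2, d3, d4, d5⟩ := hderiv t ht
    obtain ⟨s1, s2, s3, s4⟩ := hsol t ht
    refine ⟨?_, (mem_extDomain_iff μ _).2 ⟨s1, s2⟩⟩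
    refine (d1.prodMk (d3.prodMk (d2.prodMk (d4.prodMk (d5.sub_const (θ 0)))))).congr_deriv ?_
    simp only [extField, hγdef]
    rw [← hangvel t ht, ← s3, ← s4]
    ring_nf
  obtain ⟨δ, W, φ, hδ, hW, hγW, hφ, hφc, hφγ⟩ := exists_flow_near_trajectory (extField μ)
    (extDomain μ) (isOpen_extDomain μ) (contDiffAt_extField μ) γ T hT hγ
  set ι : ℝ × ℝ × ℝ × ℝ → ℝ × ℝ × ℝ × ℝ × ℝ :=
    fun w => (w.1, w.2.1, w.2.2.1, w.2.2.2, 0) with hι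
  have hιc : Continuous ι := by fun_prop
  have hιz : ι z = γ 0 := by
    simp only [hι, hγdef, hinit.1, hinit.2.1, hinit.2.2.1, hinit.2.2.2, sub_self]
  have hTδ : T ∈ Set.Icc 0 (T + δ) := ⟨hT.le, by linarith⟩
  have hcont : ∀ w, ι w ∈ W → ∀ t ∈ Set.Icc 0 (T + δ),
      ContinuousAt (fun q : (ℝ × ℝ × ℝ × ℝ) × ℝ => φ (ι q.1) q.2) (w, t) := by
    intro w hw t ht
    have h1 : ContinuousAt (fun q : (ℝ × ℝ × ℝ × ℝ) × ℝ => (ι q.1, q.2)) (w, t) := by fun_prop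
    exact ContinuousAt.comp (g := Function.uncurry φ)
      (f := fun q : (ℝ × ℝ × ℝ × ℝ) × ℝ => (ι q.1, q.2)) (x := (w, t)) (hφc (ι w) hw t ht) h1
  have hφd : ∀ w, ι w ∈ W → ∀ t ∈ Set.Icc 0 (T + δ),
      HasDerivAt (fun t => (φ (ι w) t).2.2.2.2) (extField μ (φ (ι w) t)).2.2.2.2 t :=
    fun w hw t ht => (hφ (ι w) hw).2 t ht |>.1.snd.snd.snd.snd
  have hzW : ι z ∈ W := hιz ▸ hγW
  -- The angle may turn in either direction at time `T`; multiplying by `σ` makes it increasing.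
  obtain ⟨σ, hσ⟩ : ∃ σ : ℝ, 0 < σ * θ' T := by
    have h := htransverse T ⟨hT, le_rfl⟩ ⟨n, by rw [hturns]; push_cast; ring⟩
    exact ⟨θ' T, mul_self_pos.2 h⟩
  have hσ0 : σ ≠ 0 := fun h => by simp [h] at hσ
  have hpos : ∀ᶠ q : (ℝ × ℝ × ℝ × ℝ) × ℝ in nhds (z, T),
      0 < σ * (extField μ (φ (ι q.1) q.2)).2.2.2.2 := by
    have hc : ContinuousAt (fun q : (ℝ × ℝ × ℝ × ℝ) × ℝ =>
        σ * (extField μ (φ (ι q.1) q.2)).2.2.2.2) (z, T) := by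
      have h1 := (contDiffAt_extField μ _ ((hφ (ι z) hzW).2 T hTδ).2).continuousAt
      have h2 := ContinuousAt.comp (g := extField μ)
        (f := fun q : (ℝ × ℝ × ℝ × ℝ) × ℝ => φ (ι q.1) q.2) (x := (z, T)) h1 (hcont z hzW T hTδ)
      exact continuousAt_const.mul h2.snd.snd.snd.snd
    refine hc.eventually_const_lt ?_
    simp only
    rw [hιz, hφγ T hIccT]
    simp only [extField, hγdef]
    rwa [← hangvel T hIccT]
  obtain ⟨u, v, hu, hzu, hv, hTv, huv⟩ := mem_nhds_prod_iff'.1 hpos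
  obtain ⟨ε, hε, hεv⟩ := Metric.isOpen_iff.1 hv T hTv
  obtain ⟨η, hη, hηm⟩ : ∃ η, 0 < η ∧ η < min ε (min δ T) := exists_between (by positivity)
  obtain ⟨hηε, hηδ, hηT⟩ : η < ε ∧ η < δ ∧ η < T := by simpa using hηm
  have hsub : Set.Icc (T - η) (T + η) ⊆ Set.Icc 0 (T + δ) :=
    Set.Icc_subset_Icc (by linarith) (by linarith)
  obtain ⟨U, hU, hUW, τ, hτc, hτz, hτ⟩ := exists_continuous_crossing
    (fun w t => σ * (φ (ι w) t).2.2.2.2) z T (T - η) (T + η) (by linarith) (by linarith)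
    (u ∩ ι ⁻¹' W) (hu.inter (hW.preimage hιc)) ⟨hzu, hzW⟩
    (fun t ht w hw => by
      have h1 : ContinuousAt (fun w : ℝ × ℝ × ℝ × ℝ => (w, t)) w := by fun_prop
      have := ContinuousAt.comp (g := fun q : (ℝ × ℝ × ℝ × ℝ) × ℝ => φ (ι q.1) q.2)
        (f := fun w : ℝ × ℝ × ℝ × ℝ => (w, t)) (x := w) (hcont w hw.2 t (hsub ht)) h1
      exact (continuousAt_const.mul this.snd.snd.snd.snd).continuousWithinAt)
    (fun w hw t ht =>
      ((hφd w hw.2 t (hsub ht)).const_mul σ).continuousAt.continuousWithinAt)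
    (fun w hw => by
      refine strictMonoOn_of_deriv_pos (convex_Icc _ _) (fun t ht =>
        ((hφd w hw.2 t (hsub ht)).const_mul σ).continuousAt.continuousWithinAt) fun t ht => ?_
      have ht' := interior_subset ht
      rw [((hφd w hw.2 t (hsub ht')).const_mul σ).deriv]
      refine huv (Set.mk_mem_prod hw.1 (hεv ?_))
      rw [Metric.mem_ball, Real.dist_eq, abs_lt]
      constructor <;> linarith [ht'.1, ht'.2])
  have hτsub : ∀ w ∈ U, Set.Icc 0 (τ w) ⊆ Set.Icc 0 (T + δ) := fun w hw =>
    Set.Icc_subset_Icc_right (by linarith [(hτ w hw).1.2])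
  have hτA : ∀ w ∈ U, (φ (ι w) (τ w)).2.2.2.2 = 2 * Real.pi * n := by
    intro w hw
    have h := mul_left_cancel₀ hσ0 (hτ w hw).2
    rw [h, hιz, hφγ T hIccT]
    simp only [hγdef]
    linarith
  -- The initial value `arg` need not be continuous in `w`, and only the increment of the angle
  -- enters the definition of `τ`.
  refine ⟨U, hU, τ, hτc, fun w hw => by linarith [(hτ w hw).1.1], hτz,
    fun w t => (φ (ι w) t).1, fun w t => (φ (ι w) t).2.1, fun w t => (φ (ι w) t).2.2.1,
    fun w t => (extField μ (φ (ι w) t)).2.2.1, fun w t => (φ (ι w) t).2.2.2.1,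
    fun w t => (extField μ (φ (ι w) t)).2.2.2.1,
    fun w t => Complex.arg ⟨w.1 - μ, w.2.1⟩ + (φ (ι w) t).2.2.2.2, fun w hw => ?_, ?_⟩
  · have hwW : ι w ∈ W := (hUW hw).2
    obtain ⟨h0, hsolw⟩ := hφ (ι w) hwW
    have h0' : φ (ι w) 0 = (w.1, w.2.1, w.2.2.1, w.2.2.2, 0) := h0
    have hd : ∀ t ∈ Set.Icc 0 (τ w),
        HasDerivAt (φ (ι w)) (extField μ (φ (ι w) t)) t ∧ φ (ι w) t ∈ extDomain μ :=
      fun t ht => hsolw t (hτsub w hw ht)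
    have hΘd : ∀ t ∈ Set.Icc 0 (τ w),
        HasDerivAt (fun t => Complex.arg ⟨w.1 - μ, w.2.1⟩ + (φ (ι w) t).2.2.2.2)
          (extField μ (φ (ι w) t)).2.2.2.2 t := fun t ht =>
      (hφd w hwW t (hτsub w hw ht)).const_add _
    have hnorm : ‖(⟨w.1 - μ, w.2.1⟩ : ℂ)‖ = √((w.1 - μ) ^ 2 + w.2.1 ^ 2) := by
      rw [Complex.norm_def, Complex.normSq_apply]; ring_nf
    refine ⟨by simp only [h0'], by simp only [h0'], by simp only [h0'], by simp only [h0'],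
      fun t ht => ⟨(hd t ht).1.fst, (hd t ht).1.snd.snd.fst, (hd t ht).1.snd.fst,
        (hd t ht).1.snd.snd.snd.fst⟩, fun t ht => ?_,
      fun t ht => (hΘd t ht).continuousAt.continuousWithinAt, ?_, ?_⟩
    · obtain ⟨h1, h2⟩ := (mem_extDomain_iff μ _).1 (hd t ht).2
      exact ⟨h1, h2, by simp [extField], by simp [extField]⟩
    · refine polar_of_hasDerivAt (x' := fun t => (φ (ι w) t).2.2.1)
        (y' := fun t => (φ (ι w) t).2.2.2.1) μ (fun t ht => (hd t ht).1.fst)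
        (fun t ht => (hd t ht).1.snd.fst) (fun t ht => (hd t ht).2.1) hΘd ?_ ?_
      · have := Complex.norm_mul_cos_arg ⟨w.1 - μ, w.2.1⟩
        rw [hnorm] at this
        simp only [h0', add_zero]
        rw [this]; ring
      · have := Complex.norm_mul_sin_arg ⟨w.1 - μ, w.2.1⟩
        rw [hnorm] at this
        simp only [h0', add_zero]
        rw [this]
    · simp only [hτA w hw, h0', add_zero]
  · have hτcz : ContinuousAt τ z := hτc.continuousAt hU
    have h1 : ContinuousAt (fun w : ℝ × ℝ × ℝ × ℝ => (w, τ w)) z := continuousAt_id.prodMk hτcz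
    have h2 : ContinuousAt (fun w => φ (ι w) (τ w)) z :=
      ContinuousAt.comp (g := fun q : (ℝ × ℝ × ℝ × ℝ) × ℝ => φ (ι q.1) q.2)
        (f := fun w : ℝ × ℝ × ℝ × ℝ => (w, τ w)) (x := z) (by rw [hτz]; exact hcont z hzW T hTδ) h1
    exact h2.fst.prodMk (h2.snd.fst.prodMk (h2.snd.snd.fst.prodMk h2.snd.snd.snd.fst))
end
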